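/- Let X be a real linear space, (Y, N) a fuzzy normed space, (Z, N′) a fuzzy normed space, α a real number with 0 < |α| < 4, and φ : X × X → Z with φ(2x, 2y) = α · φ(x, y) for all x, y ∈ X. Suppose f, g, h : X → Y are even functions with f(0) = g(0) = h(0) = 0 such that N (f(x+y) + f(x−y) − 2g(x) − 2h(y)) t ≥ N′ (φ(x, y)) t for all x, y ∈ X and all t ∈ ℝ. Then for all integers n > m ≥ 0, all x ∈ X and all t > 0, N (f(2^n x)/4^n − f(2^m x)/4^m) (Σ_{k=m+1}^{n} |α|^(k−1) · t / 4^k) ≥ N″ x t, where N″ x t = min {N′ (φ(x,x)) (t/3), N′ (φ(x,0)) (t/3), N′ (φ(0,x)) (t/3)}. -/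

import Mathlib

/-!
Write `D x y = f (x + y) + f (x - y) - 2 g x - 2 h y`. Since `f` is even and `f`, `g`, `h` vanish
at `0`, we have `f (2x) - 4 f x = D x x - D x 0 - D 0 x`, so the triangle inequality (N4) gives
`N (f (2x) - 4 f x) t ≥ N″ x t`. The homogeneity of `φ` gives `N″ (2^k x) (|α|^k t) = N″ x t`;
hence each difference `f (2^(k+1) x) / 4^(k+1) - f (2^k x) / 4^k` is controlled by `N″ x t` at the
radius `|α|^k t / 4^(k+1)`. Summing these differences with (N4) costs nothing, because the lower
bound is the same for every `k`.
-/

open Filter Finset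

/-- A fuzzy norm on a real vector space, following Bag–Samanta. -/
structure IsFuzzyNorm {X : Type*} [AddCommGroup X] [Module ℝ X] (N : X → ℝ → ℝ) : Prop where
  nonneg : ∀ (x : X) (t : ℝ), 0 ≤ N x t
  le_one : ∀ (x : X) (t : ℝ), N x t ≤ 1
  eq_zero_of_nonpos : ∀ (x : X) (c : ℝ), c ≤ 0 → N x c = 0
  eq_zero_iff : ∀ x : X, x = 0 ↔ ∀ c : ℝ, 0 < c → N x c = 1
  smul_eq : ∀ (c : ℝ) (x : X) (t : ℝ), c ≠ 0 → N (c • x) t = N x (t / |c|)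
  min_le_add : ∀ (x y : X) (s t : ℝ), min (N x s) (N y t) ≤ N (x + y) (s + t)
  mono : ∀ x : X, Monotone (N x)
  tendsto_one : ∀ x : X, Tendsto (N x) atTop (nhds 1)

/-- Convergence of a sequence to a fuzzy limit in a fuzzy normed space. -/
def FuzzyTendsto {X : Type*} [AddCommGroup X] [Module ℝ X] (N : X → ℝ → ℝ)
    (xs : ℕ → X) (x : X) : Prop :=
  ∀ t : ℝ, 0 < t → Tendsto (fun n => N (xs n - x) t) atTop (nhds 1)

/-- Cauchy sequences in a fuzzy normed space. -/
def FuzzyCauchy {X : Type*} [AddCommGroup X] [Module ℝ X] (N : X → ℝ → ℝ)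
    (xs : ℕ → X) : Prop :=
  ∀ ε : ℝ, 0 < ε → ∀ t : ℝ, 0 < t → ∃ n₀ : ℕ, ∀ n ≥ n₀, ∀ p : ℕ, 0 < p →
    1 - ε < N (xs (n + p) - xs n) t

/-- A fuzzy normed space is complete (a fuzzy Banach space) if every Cauchy
sequence converges. -/
def IsFuzzyComplete {X : Type*} [AddCommGroup X] [Module ℝ X] (N : X → ℝ → ℝ) : Prop :=
  ∀ xs : ℕ → X, FuzzyCauchy N xs → ∃ x : X, FuzzyTendsto N xs x

/-- Quadratic functional equation. -/
def IsQuadratic {X Y : Type*} [AddCommGroup X] [AddCommGroup Y] (Q : X → Y) : Prop :=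
  ∀ x y : X, Q (x + y) + Q (x - y) = 2 • Q x + 2 • Q y

/-- Additive functional equation. -/
def IsAdditive {X Y : Type*} [AddCommGroup X] [AddCommGroup Y] (T : X → Y) : Prop :=
  ∀ x y : X, T (x + y) = T x + T y

/-- The control function `N″ x t = min {N′(φ(x,x))(t/3), N′(φ(x,0))(t/3), N′(φ(0,x))(t/3)}`. -/
noncomputable def Ndd {X Z : Type*} [Zero X] (N' : Z → ℝ → ℝ) (φ : X × X → Z) (x : X) (t : ℝ) : ℝ :=
  min (min (N' (φ (x, x)) (t / 3)) (N' (φ (x, 0)) (t / 3))) (N' (φ (0, x)) (t / 3))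

namespace IsFuzzyNorm

variable {Y : Type*} [AddCommGroup Y] [Module ℝ Y] {N : Y → ℝ → ℝ}

lemma apply_smul_abs_mul (hN : IsFuzzyNorm N) {c : ℝ} (hc : c ≠ 0) (y : Y) (t : ℝ) :
    N (c • y) (|c| * t) = N y t := by
  rw [hN.smul_eq c y _ hc, mul_div_cancel_left₀ t (abs_ne_zero.mpr hc)]

lemma apply_neg (hN : IsFuzzyNorm N) (y : Y) (t : ℝ) : N (-y) t = N y t := by
  simpa using hN.apply_smul_abs_mul (neg_ne_zero.mpr one_ne_zero) y t

lemma min_le_sub (hN : IsFuzzyNorm N) (x y : Y) (s t : ℝ) :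
    min (N x s) (N y t) ≤ N (x - y) (s + t) := by
  simpa only [sub_eq_add_neg, hN.apply_neg] using hN.min_le_add x (-y) s t

lemma le_apply_sum (hN : IsFuzzyNorm N) {ι : Type*} {s : Finset ι} (hs : s.Nonempty)
    {u : ι → Y} {r : ι → ℝ} {b : ℝ} (hb : ∀ i ∈ s, b ≤ N (u i) (r i)) :
    b ≤ N (∑ i ∈ s, u i) (∑ i ∈ s, r i) := by
  induction hs using Finset.Nonempty.cons_induction with
  | singleton i => simpa using hb
  | cons i s his _ ih =>
    rw [Finset.forall_mem_cons] at hb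
    rw [Finset.sum_cons, Finset.sum_cons]
    exact (le_min hb.1 (ih hb.2)).trans (hN.min_le_add _ _ _ _)

lemma le_apply_sub_of_forall_le_apply_succ_sub (hN : IsFuzzyNorm N) {u : ℕ → Y} {r : ℕ → ℝ}
    {b : ℝ} {m n : ℕ} (hmn : m < n) (hb : ∀ k ∈ Ico m n, b ≤ N (u (k + 1) - u k) (r k)) :
    b ≤ N (u n - u m) (∑ k ∈ Ico m n, r k) := by
  rw [← Finset.sum_Ico_sub u hmn.le]
  exact hN.le_apply_sum (nonempty_Ico.mpr hmn) hb

end IsFuzzyNorm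

section Control

variable {X Z : Type*} [AddMonoid X] [AddCommGroup Z] [Module ℝ Z] {N' : Z → ℝ → ℝ} {α : ℝ}
  {φ : X × X → Z} {d : ℕ}

lemma Ndd_nsmul (hN' : IsFuzzyNorm N') (hα : α ≠ 0)
    (hφ : ∀ x y : X, φ (d • x, d • y) = α • φ (x, y)) (x : X) (t : ℝ) :
    Ndd N' φ (d • x) (|α| * t) = Ndd N' φ x t := by
  have hφ_right : φ (d • x, 0) = α • φ (x, 0) := by simpa only [nsmul_zero] using hφ x 0
  have hφ_left : φ (0, d • x) = α • φ (0, x) := by simpa only [nsmul_zero] using hφ 0 x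
  simp only [Ndd, hφ x x, hφ_right, hφ_left, mul_div_assoc, hN'.apply_smul_abs_mul hα]

lemma Ndd_pow_nsmul (hN' : IsFuzzyNorm N') (hα : α ≠ 0)
    (hφ : ∀ x y : X, φ (d • x, d • y) = α • φ (x, y)) (x : X) (t : ℝ) (k : ℕ) :
    Ndd N' φ (d ^ k • x) (|α| ^ k * t) = Ndd N' φ x t := by
  induction k with
  | zero => simp only [pow_zero, one_nsmul, one_mul]
  | succ k ih => rw [pow_succ', mul_nsmul', pow_succ', mul_assoc, Ndd_nsmul hN' hα hφ, ih]

end Control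

section Pexider

variable {X Y : Type*} [AddGroup X] [AddCommGroup Y]

/-- The defect of the Pexiderized quadratic equation `f (x + y) + f (x - y) = 2 g x + 2 h y`;
it vanishes identically exactly when the equation holds. -/
def pexiderDefect (f g h : X → Y) (x y : X) : Y :=
  f (x + y) + f (x - y) - 2 • g x - 2 • h y

lemma two_nsmul_sub_four_nsmul_eq_pexiderDefect {f g h : X → Y} (hf : ∀ x, f (-x) = f x)
    (hf0 : f 0 = 0) (hg0 : g 0 = 0) (hh0 : h 0 = 0) (x : X) :
    f (2 • x) - 4 • f x =
      pexiderDefect f g h x x - pexiderDefect f g h x 0 - pexiderDefect f g h 0 x := by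
  simp only [pexiderDefect, sub_self, add_zero, zero_add, sub_zero, zero_sub, hf, hf0, hg0, hh0,
    smul_zero, two_nsmul x]
  abel

lemma Ndd_le_two_nsmul_sub_four_nsmul [Module ℝ Y] {Z : Type*} {N : Y → ℝ → ℝ}
    {N' : Z → ℝ → ℝ} (hN : IsFuzzyNorm N) {φ : X × X → Z} {f g h : X → Y} (hf : ∀ x, f (-x) = f x)
    (hf0 : f 0 = 0) (hg0 : g 0 = 0) (hh0 : h 0 = 0)
    (hineq : ∀ x y t, N' (φ (x, y)) t ≤ N (pexiderDefect f g h x y) t) (x : X) (t : ℝ) :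
    Ndd N' φ x t ≤ N (f (2 • x) - 4 • f x) t := by
  set D := pexiderDefect f g h
  calc Ndd N' φ x t
      ≤ min (min (N (D x x) (t / 3)) (N (D x 0) (t / 3))) (N (D 0 x) (t / 3)) :=
        min_le_min (min_le_min (hineq x x _) (hineq x 0 _)) (hineq 0 x _)
    _ ≤ min (N (D x x - D x 0) (t / 3 + t / 3)) (N (D 0 x) (t / 3)) :=
        min_le_min_right _ (hN.min_le_sub _ _ _ _)
    _ ≤ N (D x x - D x 0 - D 0 x) (t / 3 + t / 3 + t / 3) := hN.min_le_sub _ _ _ _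
    _ = N (f (2 • x) - 4 • f x) t := by
        rw [two_nsmul_sub_four_nsmul_eq_pexiderDefect hf hf0 hg0 hh0, add_thirds]

end Pexider

section HyersSeq

variable {X Y : Type*} [AddMonoid X] [AddCommGroup Y] [Module ℝ Y]

/-- The Hyers sequence `f (2 ^ n x) / 4 ^ n` of `f` at `x`, which the direct method uses to
approximate `f` by a quadratic map. The dilation is by natural multiples, so that `X` need not be
a real vector space. -/
noncomputable def hyersSeq (f : X → Y) (x : X) (n : ℕ) : Y :=
  ((4 : ℝ) ^ n)⁻¹ • f (2 ^ n • x)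

lemma hyersSeq_succ_sub (f : X → Y) (x : X) (k : ℕ) :
    hyersSeq f x (k + 1) - hyersSeq f x k =
      ((4 : ℝ) ^ (k + 1))⁻¹ • (f (2 • 2 ^ k • x) - 4 • f (2 ^ k • x)) := by
  have hscale : ((4 : ℝ) ^ k)⁻¹ = ((4 : ℝ) ^ (k + 1))⁻¹ * 4 := by
    rw [pow_succ]; field_simp
  rw [hyersSeq, hyersSeq, hscale, pow_succ' 2 k, mul_nsmul']
  module

lemma IsFuzzyNorm.apply_hyersSeq_succ_sub {N : Y → ℝ → ℝ} (hN : IsFuzzyNorm N) (f : X → Y)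
    (x : X) (k : ℕ) (t : ℝ) :
    N (hyersSeq f x (k + 1) - hyersSeq f x k) (t / 4 ^ (k + 1)) =
      N (f (2 • 2 ^ k • x) - 4 • f (2 ^ k • x)) t := by
  have hpos : (0 : ℝ) < (4 ^ (k + 1))⁻¹ := by positivity
  have hradius : t / 4 ^ (k + 1) = |((4 : ℝ) ^ (k + 1))⁻¹| * t := by
    rw [abs_of_pos hpos, div_eq_inv_mul]
  rw [hyersSeq_succ_sub, hradius, hN.apply_smul_abs_mul hpos.ne']

end HyersSeq

theorem fuzzy_pexider_even_telescoping_general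
    {X Y Z : Type*} [AddGroup X] [AddCommGroup Y] [Module ℝ Y] [AddCommGroup Z] [Module ℝ Z]
    {N : Y → ℝ → ℝ} {N' : Z → ℝ → ℝ} (hN : IsFuzzyNorm N) (hN' : IsFuzzyNorm N')
    {α : ℝ} (hα : α ≠ 0) {φ : X × X → Z}
    (hφ : ∀ x y : X, φ (2 • x, 2 • y) = α • φ (x, y))
    {f g h : X → Y} (hf : ∀ x, f (-x) = f x) (hf0 : f 0 = 0) (hg0 : g 0 = 0) (hh0 : h 0 = 0)
    (hineq : ∀ x y t, N' (φ (x, y)) t ≤ N (pexiderDefect f g h x y) t)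
    {m n : ℕ} (hmn : m < n) (x : X) (t : ℝ) :
    Ndd N' φ x t ≤
      N (hyersSeq f x n - hyersSeq f x m) (∑ k ∈ Ioc m n, |α| ^ (k - 1) * t / (4 : ℝ) ^ k) := by
  have hstep (k : ℕ) : Ndd N' φ x t ≤
      N (hyersSeq f x (k + 1) - hyersSeq f x k) (|α| ^ k * t / 4 ^ (k + 1)) := by
    rw [hN.apply_hyersSeq_succ_sub, ← Ndd_pow_nsmul hN' hα hφ x t k]
    exact Ndd_le_two_nsmul_sub_four_nsmul hN hf hf0 hg0 hh0 hineq _ _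
  rw [← Ico_add_one_add_one_eq_Ioc, ← Finset.sum_Ico_add']
  exact hN.le_apply_sub_of_forall_le_apply_succ_sub hmn fun k _ ↦ hstep k

/-- The telescoping estimate (3.24) in the proof of Proposition 3.2. -/
theorem fuzzy_pexider_even_telescoping
    {X Y Z : Type*} [AddCommGroup X] [Module ℝ X]
    [AddCommGroup Y] [Module ℝ Y] [AddCommGroup Z] [Module ℝ Z]
    (N : Y → ℝ → ℝ) (N' : Z → ℝ → ℝ)
    (hN : IsFuzzyNorm N) (hN' : IsFuzzyNorm N')
    (α : ℝ) (hα0 : 0 < |α|) (hα4 : |α| < 4)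
    (φ : X × X → Z)
    (hφ : ∀ x y : X, φ (2 • x, 2 • y) = α • φ (x, y))
    (f g h : X → Y)
    (hfeven : ∀ x : X, f (-x) = f x)
    (hgeven : ∀ x : X, g (-x) = g x)
    (hheven : ∀ x : X, h (-x) = h x)
    (hf0 : f 0 = 0) (hg0 : g 0 = 0) (hh0 : h 0 = 0)
    (hineq : ∀ x y : X, ∀ t : ℝ,
      N' (φ (x, y)) t ≤ N (f (x + y) + f (x - y) - 2 • g x - 2 • h y) t) :
    ∀ n m : ℕ, m < n → ∀ x : X, ∀ t : ℝ, 0 < t →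
      Ndd N' φ x t ≤
        N (((4 : ℝ) ^ n)⁻¹ • f (((2 : ℝ) ^ n) • x) - ((4 : ℝ) ^ m)⁻¹ • f (((2 : ℝ) ^ m) • x))
          (∑ k ∈ Finset.Ioc m n, |α| ^ (k - 1) * t / (4 : ℝ) ^ k) := by
  intro n m hmn x t _
  simpa only [hyersSeq, ← Nat.cast_smul_eq_nsmul ℝ, Nat.cast_pow, Nat.cast_ofNat] using
    fuzzy_pexider_even_telescoping_general hN hN' (abs_pos.mp hα0) hφ hfeven hf0 hg0 hh0 hineq
      hmn x t
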